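/- Let θ ∈ ℝ, σ > 0, and let U and V be independent standard normal random variables. Then the random variable θU² + σUV has probability density function f(x) = (1/(σπ)) · exp(θx/σ²) · K₀(√(θ²+σ²)|x|/σ²) for all real x, i.e., θU² + σUV has the variance-gamma distribution VG(1, θ, σ, 0). -/

import Mathlib

/-!
Conditionally on `U = u`, the variable `θU² + σUV` has law `N(θu², σ²u²)`. Averaging its density over
`u` (Tonelli) shows that `θU² + σUV` has density
`x ↦ ∫ φ(u) φ_{θu², σ²u²}(x) du`, which for `x ≠ 0` equals
`(πσ)⁻¹ exp(θx/σ²) ∫₀^∞ exp(-(s²u²/σ² + x²/(σ²u²))/2) du/u` with `s = √(θ² + σ²)`.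
The substitution `u = √(|x|/s) exp(t/2)` turns the exponent into `-(s|x|/σ²) cosh t` and the integral
into `K₀(s|x|/σ²)`. All integrals are handled as Lebesgue integrals of nonnegative functions, so that
integrability is only needed for the integral that defines `K₀`.
-/

open MeasureTheory ProbabilityTheory

/-- The modified Bessel function of the second kind `K_ν(x)`, for `x > 0` given by
`K_ν(x) = ∫₀^∞ exp(−x cosh t) cosh(ν t) dt`. -/
noncomputable def besselK (ν x : ℝ) : ℝ :=
  ∫ t in Set.Ioi (0 : ℝ), Real.exp (-x * Real.cosh t) * Real.cosh (ν * t)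

lemma lintegral_even {f : ℝ → ENNReal} (hf : ∀ x, f (-x) = f x) :
    ∫⁻ x, f x = 2 * ∫⁻ x in Set.Ioi (0 : ℝ), f x := by
  have h1 : ∫⁻ x in Set.Iio (0 : ℝ), f x = ∫⁻ x in Set.Ioi (0 : ℝ), f x := by
    have := (Measure.measurePreserving_neg (volume : Measure ℝ)).setLIntegral_comp_preimage_emb
      (MeasurableEquiv.neg ℝ).measurableEmbedding f (Set.Iio (0 : ℝ))
    rw [← this]
    simp [hf]
  rw [← lintegral_add_compl f (measurableSet_Ioi (a := (0 : ℝ))), Set.compl_Ioi,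
    ← setLIntegral_congr (Iio_ae_eq_Iic (a := (0 : ℝ)) (μ := volume)), h1, two_mul]

lemma lintegral_Ioi_exp_subst {c : ℝ} (hc : 0 < c) (f : ℝ → ENNReal) :
    ∫⁻ u in Set.Ioi (0 : ℝ), f u =
      ∫⁻ t, ENNReal.ofReal (c * Real.exp (t / 2) / 2) * f (c * Real.exp (t / 2)) := by
  have himg : (fun t : ℝ => c * Real.exp (t / 2)) '' Set.univ = Set.Ioi 0 := by
    ext u
    simp only [Set.image_univ, Set.mem_range, Set.mem_Ioi]
    constructor
    · rintro ⟨t, rfl⟩; positivity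
    · intro hu
      refine ⟨2 * Real.log (u / c), ?_⟩
      rw [mul_div_cancel_left₀ _ two_ne_zero, Real.exp_log (by positivity)]
      field_simp
  have hder : ∀ t ∈ Set.univ, HasDerivWithinAt (fun t : ℝ => c * Real.exp (t / 2))
      (c * Real.exp (t / 2) / 2) Set.univ t := by
    intro t _
    have h := (((hasDerivAt_id t).div_const 2).exp.const_mul c).hasDerivWithinAt (s := Set.univ)
    refine h.congr_deriv ?_
    simp only [id]; ring
  have hinj : Set.InjOn (fun t : ℝ => c * Real.exp (t / 2)) Set.univ := by
    intro a _ b _ hab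
    have := Real.exp_injective (mul_left_cancel₀ hc.ne' hab)
    linarith
  rw [← himg, lintegral_image_eq_lintegral_abs_deriv_mul MeasurableSet.univ hder hinj,
    Measure.restrict_univ]
  refine lintegral_congr fun t => ?_
  rw [abs_of_pos (by positivity)]

lemma lintegral_exp_cosh {z : ℝ} (hz : 0 < z) :
    ∫⁻ t, ENNReal.ofReal (Real.exp (-z * Real.cosh t)) = 2 * ENNReal.ofReal (besselK 0 z) := by
  rw [lintegral_even (fun x => by rw [Real.cosh_neg])]
  congr 1
  unfold besselK
  simp only [zero_mul, Real.cosh_zero, mul_one]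
  rw [ofReal_integral_eq_lintegral_ofReal]
  · refine Integrable.mono' (integrableOn_exp_mul_Ioi (neg_lt_zero.mpr hz) 0)
      (by fun_prop) ?_
    refine (ae_restrict_mem measurableSet_Ioi).mono fun t ht => ?_
    rw [Real.norm_of_nonneg (Real.exp_pos _).le, Real.exp_le_exp]
    have h1 : t ≤ Real.sinh t := Real.self_le_sinh_iff.mpr (le_of_lt ht)
    have h2 := Real.sinh_lt_cosh t
    nlinarith
  · exact Filter.Eventually.of_forall fun t => (Real.exp_pos _).le

/-- The joint density at `(u, x)` of `(U, θU² + σUV)`, where `U` and `V` are independent standard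
normal variables. -/
noncomputable def jointDensity (θ σ u x : ℝ) : ENNReal :=
  gaussianPDF 0 1 u * gaussianPDF (θ * u ^ 2) (Real.toNNReal ((σ * u) ^ 2)) x

lemma measurable_jointDensity (θ σ : ℝ) :
    Measurable (fun p : ℝ × ℝ => jointDensity θ σ p.1 p.2) := by
  unfold jointDensity gaussianPDF gaussianPDFReal
  fun_prop

lemma jointDensity_eq (θ : ℝ) {σ : ℝ} (hσ : 0 < σ) {u : ℝ} (hu : u ≠ 0) (x : ℝ) :
    jointDensity θ σ u x = ENNReal.ofReal (1 / (2 * Real.pi * σ * |u|) *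
      Real.exp (θ * x / σ ^ 2) *
      Real.exp (-((θ ^ 2 + σ ^ 2) * u ^ 2 / σ ^ 2 + x ^ 2 / (σ ^ 2 * u ^ 2)) / 2)) := by
  unfold jointDensity gaussianPDF
  rw [← ENNReal.ofReal_mul (gaussianPDFReal_nonneg _ _ _)]
  congr 1
  unfold gaussianPDFReal
  rw [Real.coe_toNNReal _ (sq_nonneg _)]
  have hsq : √(2 * Real.pi * (σ * u) ^ 2) = √(2 * Real.pi) * (σ * |u|) := by
    rw [Real.sqrt_mul (by positivity), Real.sqrt_sq_eq_abs, abs_mul, abs_of_pos hσ]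
  have hpi : √(2 * Real.pi) * √(2 * Real.pi) = 2 * Real.pi := Real.mul_self_sqrt (by positivity)
  have hexp : Real.exp (-(u - 0) ^ 2 / (2 * 1)) *
        Real.exp (-(x - θ * u ^ 2) ^ 2 / (2 * (σ * u) ^ 2)) =
      Real.exp (θ * x / σ ^ 2) *
      Real.exp (-((θ ^ 2 + σ ^ 2) * u ^ 2 / σ ^ 2 + x ^ 2 / (σ ^ 2 * u ^ 2)) / 2) := by
    rw [← Real.exp_add, ← Real.exp_add]
    congr 1
    field_simp
    ring
  rw [hsq, NNReal.coe_one, mul_assoc (1 / _), ← hexp, mul_one (2 * Real.pi)]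
  have hu' : |u| ≠ 0 := abs_ne_zero.mpr hu
  have : 1 / (2 * Real.pi * σ * |u|) = (√(2 * Real.pi))⁻¹ * (√(2 * Real.pi) * (σ * |u|))⁻¹ := by
    rw [← mul_inv, ← mul_assoc, hpi, one_div]
    ring_nf
  rw [this]
  ring

/-- Integrating out `u` from the joint density gives the variance-gamma density. -/
lemma lintegral_jointDensity (θ : ℝ) {σ : ℝ} (hσ : 0 < σ) {x : ℝ} (hx : x ≠ 0) :
    ∫⁻ u, jointDensity θ σ u x = ENNReal.ofReal
        (1 / (σ * Real.pi) * Real.exp (θ * x / σ ^ 2) *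
          besselK 0 (Real.sqrt (θ ^ 2 + σ ^ 2) * |x| / σ ^ 2)) := by
  set s := Real.sqrt (θ ^ 2 + σ ^ 2) with hs
  have hs0 : 0 < s := Real.sqrt_pos.mpr (by positivity)
  have hs2 : θ ^ 2 + σ ^ 2 = s ^ 2 := (Real.sq_sqrt (by positivity)).symm
  have hx' : 0 < |x| := abs_pos.mpr hx
  set c := √(|x| / s) with hcdef
  have hc : 0 < c := Real.sqrt_pos.mpr (by positivity)
  have hc2 : c ^ 2 = |x| / s := Real.sq_sqrt (by positivity)
  have hz : 0 < s * |x| / σ ^ 2 := by positivity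
  rw [lintegral_even (fun u => by simp [jointDensity, gaussianPDF, gaussianPDFReal]),
    lintegral_Ioi_exp_subst hc]
  have key : ∀ t : ℝ, ENNReal.ofReal (c * Real.exp (t / 2) / 2) *
      jointDensity θ σ (c * Real.exp (t / 2)) x =
      ENNReal.ofReal (1 / (4 * Real.pi * σ) * Real.exp (θ * x / σ ^ 2)) *
        ENNReal.ofReal (Real.exp (-(s * |x| / σ ^ 2) * Real.cosh t)) := by
    intro t
    have hu : 0 < c * Real.exp (t / 2) := by positivity
    have hu2 : (c * Real.exp (t / 2)) ^ 2 = |x| / s * Real.exp t := by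
      rw [mul_pow, hc2, ← Real.exp_nat_mul]
      congr 2
      push_cast; ring
    rw [jointDensity_eq θ hσ hu.ne', ← ENNReal.ofReal_mul (by positivity),
      ← ENNReal.ofReal_mul (by positivity), abs_of_pos hu, hs2, hu2]
    have hE : -(s ^ 2 * (|x| / s * Real.exp t) / σ ^ 2
          + x ^ 2 / (σ ^ 2 * (|x| / s * Real.exp t))) / 2 =
        -(s * |x| / σ ^ 2) * Real.cosh t := by
      rw [Real.cosh_eq, Real.exp_neg, ← sq_abs x]
      have := Real.exp_pos t
      field_simp
    rw [hE]
    congr 1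
    field_simp
    ring
  simp_rw [key]
  rw [lintegral_const_mul _ (by fun_prop), lintegral_exp_cosh hz, mul_left_comm _ 2, ← mul_assoc,
    ← mul_assoc]
  have h4 : (2 : ENNReal) * 2 = ENNReal.ofReal 4 := by norm_num
  rw [h4, ← ENNReal.ofReal_mul (by norm_num), ← ENNReal.ofReal_mul (by positivity)]
  congr 2
  field_simp

/-- If `U` and `V` are independent standard normal random variables, then `θU² + σUV` has
probability density function `f(x) = (1/(σπ)) exp(θx/σ²) K₀(√(θ²+σ²)|x|/σ²)`, i.e., it has
the variance-gamma distribution `VG(1, θ, σ, 0)`. -/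
theorem normal_product_variance_gamma_pdf
    {Ω : Type*} [MeasurableSpace Ω] (μ : Measure Ω) [IsProbabilityMeasure μ]
    (θ σ : ℝ) (hσ : 0 < σ)
    (U V : Ω → ℝ) (hU : Measurable U) (hV : Measurable V)
    (hUV : IndepFun U V μ)
    (hUlaw : Measure.map U μ = gaussianReal 0 1)
    (hVlaw : Measure.map V μ = gaussianReal 0 1) :
    Measure.map (fun ω => θ * (U ω) ^ 2 + σ * U ω * V ω) μ =
      (volume : Measure ℝ).withDensity (fun x => ENNReal.ofReal
        (1 / (σ * Real.pi) * Real.exp (θ * x / σ ^ 2) *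
          besselK 0 (Real.sqrt (θ ^ 2 + σ ^ 2) * |x| / σ ^ 2))) := by
  have hprod := (indepFun_iff_map_prod_eq_prod_map_map hU.aemeasurable hV.aemeasurable).mp hUV
  rw [hUlaw, hVlaw] at hprod
  have hF : Measurable (fun p : ℝ × ℝ => θ * p.1 ^ 2 + σ * p.1 * p.2) := by fun_prop
  have hmap : Measure.map (fun ω => θ * (U ω) ^ 2 + σ * U ω * V ω) μ =
      ((gaussianReal 0 1).prod (gaussianReal 0 1)).map
        (fun p : ℝ × ℝ => θ * p.1 ^ 2 + σ * p.1 * p.2) := by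
    rw [← hprod, Measure.map_map hF (hU.prodMk hV)]
    rfl
  ext A hA
  rw [hmap, Measure.map_apply hF hA, Measure.prod_apply (hF hA), withDensity_apply _ hA]
  -- the conditional law of `θU² + σUV` given `U = u` is `N(θu², (σu)²)`
  have hcond : ∀ u : ℝ, gaussianReal 0 1
      (Prod.mk u ⁻¹' ((fun p : ℝ × ℝ => θ * p.1 ^ 2 + σ * p.1 * p.2) ⁻¹' A)) =
      gaussianReal (θ * u ^ 2) (Real.toNNReal ((σ * u) ^ 2)) A := by
    intro u
    have h : (gaussianReal 0 1).map (fun v => θ * u ^ 2 + σ * u * v) =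
        gaussianReal (θ * u ^ 2) (Real.toNNReal ((σ * u) ^ 2)) := by
      have : (fun v : ℝ => θ * u ^ 2 + σ * u * v) =
          (fun y => θ * u ^ 2 + y) ∘ (fun v => σ * u * v) := rfl
      rw [this, ← Measure.map_map (by fun_prop) (by fun_prop), gaussianReal_map_const_mul,
        gaussianReal_map_const_add]
      congr 1
      · simp
      · ext; simp [sq_nonneg]
    rw [← h, Measure.map_apply (by fun_prop) hA]
    rfl
  simp_rw [hcond]
  rw [gaussianReal_of_var_ne_zero 0 one_ne_zero,
    lintegral_withDensity_eq_lintegral_mul_non_measurable _ (measurable_gaussianPDF 0 1)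
      (Filter.Eventually.of_forall fun _ => gaussianPDF_lt_top)]
  have hne : ∀ᵐ y : ℝ, y ≠ 0 := by simp [ae_iff]
  have hstep : ∫⁻ u, (gaussianPDF 0 1 * fun u =>
        gaussianReal (θ * u ^ 2) (Real.toNNReal ((σ * u) ^ 2)) A) u =
      ∫⁻ u, ∫⁻ x in A, jointDensity θ σ u x := by
    refine lintegral_congr_ae (hne.mono fun u hu => ?_)
    have hv : Real.toNNReal ((σ * u) ^ 2) ≠ 0 := by
      have : 0 < (σ * u) ^ 2 := by positivity
      exact (Real.toNNReal_pos.mpr this).ne'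
    simp only [Pi.mul_apply, jointDensity]
    rw [gaussianReal_apply _ hv, lintegral_const_mul _ (measurable_gaussianPDF _ _)]
  rw [hstep, lintegral_lintegral_swap (measurable_jointDensity θ σ).aemeasurable]
  exact lintegral_congr_ae (ae_restrict_of_ae (hne.mono fun x hx => lintegral_jointDensity θ hσ hx))
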